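/- arXiv:math/0308173 — 8 statements merged into one kernel-verified Lean document; each statement's English description precedes it below -/
import Mathlib

section
/- Let U be a finite-dimensional real vector space, I : U → U a complex structure (I ∘ I = −id), G : U → U* a symmetric positive-definite linear map (G(u)(v) = G(v)(u) and G(u)(u) > 0 for u ≠ 0) which is Kähler with respect to I (G(Iu)(Iv) = G(u)(v) for all u,v), and B : U → U* skew-symmetric (B(u)(v) = −B(v)(u)). Define the endomorphism 𝓙(G,I,B) of U ⊕ U* by 𝓙(G,I,B)(u, m) = (−I G⁻¹ B u + I G⁻¹ m, (G I − B I G⁻¹ B) u + B I G⁻¹ m). Then 𝓙(G,I,B) ∘ 𝓙(G,I,B) = −id, i.e. 𝓙(G,I,B) is a complex structure on U ⊕ U*. -/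
/-! Conjugating by the shear `(u, m) ↦ (u, m - B u)` turns `𝓙` into
`(u, m) ↦ (I G⁻¹ m, G I u)`, whose square is `-id` because `I² = -id`.
Concretely, with `w = I G⁻¹ (m - B u)` one has `𝓙 (u, m) = (w, G I u + B w)` (`key`),
and applying this twice gives the result. -/

open Module

/-- The complex structure `𝓙(G,I,B)` on `U ⊕ U*` squares to `-id`. -/
theorem calJ_is_complex_structure
    (U : Type*) [AddCommGroup U] [Module ℝ U] [FiniteDimensional ℝ U]
    (I : U →ₗ[ℝ] U) (hI : I ∘ₗ I = -LinearMap.id)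
    (G : U →ₗ[ℝ] Dual ℝ U)
    (hGsymm : ∀ u v, G u v = G v u)
    (hGpos : ∀ u, u ≠ 0 → 0 < G u u)
    (hKahler : ∀ u v, G (I u) (I v) = G u v)
    (B : U →ₗ[ℝ] Dual ℝ U) (hBskew : ∀ u v, B u v = -B v u)
    (Ginv : Dual ℝ U →ₗ[ℝ] U)
    (hGinv₁ : G ∘ₗ Ginv = LinearMap.id) (hGinv₂ : Ginv ∘ₗ G = LinearMap.id)
    (𝓙 : (U × Dual ℝ U) →ₗ[ℝ] (U × Dual ℝ U))
    (h𝓙 : ∀ (u : U) (m : Dual ℝ U),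
      𝓙 (u, m) = (-(I (Ginv (B u))) + I (Ginv m),
        G (I u) - B (I (Ginv (B u))) + B (I (Ginv m)))) :
    ∀ x : U × Dual ℝ U, 𝓙 (𝓙 x) = -x := by
  have hII : ∀ u, I (I u) = -u := fun u => LinearMap.congr_fun hI u
  have hGG : ∀ m, G (Ginv m) = m := fun m => LinearMap.congr_fun hGinv₁ m
  have hGG' : ∀ u, Ginv (G u) = u := fun u => LinearMap.congr_fun hGinv₂ u
  have key : ∀ (u : U) (m : Dual ℝ U),
      𝓙 (u, m) = (I (Ginv (m - B u)), G (I u) + B (I (Ginv (m - B u)))) := by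
    intro u m
    rw [h𝓙]
    ext1
    · simp only [map_sub]; abel
    · simp only [map_sub]; abel
  rintro ⟨u, m⟩
  rw [key u m, key, add_sub_cancel_right, hGG', hII, hII]
  ext1
  · rfl
  · simp only [map_neg, hGG, Prod.snd_neg]; abel
end

section
/- Let U be a finite-dimensional real vector space, I : U → U a complex structure (I ∘ I = −id), G : U → U* symmetric positive definite and Kähler with respect to I (G(Iu)(Iv) = G(u)(v)), and B : U → U* skew-symmetric. Set ω = G ∘ I : U → U* (the Kähler form), which is invertible with inverse ω⁻¹ : U* → U. Then the endomorphism 𝓙(G,I,B) of U ⊕ U*, defined by 𝓙(G,I,B)(u, m) = (−I G⁻¹ B u + I G⁻¹ m, (G I − B I G⁻¹ B) u + B I G⁻¹ m), is given by 𝓙(G,I,B)(u, m) = (ω⁻¹ B u − ω⁻¹ m, (ω + B ω⁻¹ B) u − B ω⁻¹ m). In particular, 𝓙(G,I,B) depends on G and I only through the combination ω = G I, i.e. if G₁ I₁ = G₂ I₂ then 𝓙(G₁,I₁,B) = 𝓙(G₂,I₂,B). -/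
/-! The identity `I G⁻¹ = -ω⁻¹` (`comp_inv_eq_neg_omegaInv`) turns every occurrence of `I G⁻¹` in
the definition of `𝓙(G,I,B)` into an expression in `ω = G I` alone. For a second pair with
`G₂ I₂ = G I`, the map `ω⁻¹` is the same, so both sides reduce to the same formula in `ω` and `B`. -/

open Module

/-- Since `I⁻¹ = -I`, inverting `ω = G I` gives `ω⁻¹ = I⁻¹ G⁻¹ = -I G⁻¹`. -/
theorem comp_inv_eq_neg_omegaInv {U : Type*} [AddCommGroup U] [Module ℝ U]
    {I : U →ₗ[ℝ] U} (hI : I ∘ₗ I = -LinearMap.id)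
    {G : U →ₗ[ℝ] Dual ℝ U} {Ginv : Dual ℝ U →ₗ[ℝ] U} (hG : G ∘ₗ Ginv = LinearMap.id)
    {ωinv : Dual ℝ U →ₗ[ℝ] U} (hω : ωinv ∘ₗ (G ∘ₗ I) = LinearMap.id) (m : Dual ℝ U) :
    I (Ginv m) = -ωinv m := by
  have hII : I (I (Ginv m)) = -Ginv m := LinearMap.congr_fun hI (Ginv m)
  have hGm : G (Ginv m) = m := LinearMap.congr_fun hG m
  calc I (Ginv m) = ωinv (G (I (I (Ginv m)))) := (LinearMap.congr_fun hω (I (Ginv m))).symm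
    _ = -ωinv m := by rw [hII, map_neg, hGm, map_neg]

/-- `𝓙(G,I,B)` can be written purely in terms of `ω = G ∘ I` and `B`; in particular it
depends on `G` and `I` only through the combination `ω = G I`. -/
theorem calJ_depends_only_on_omega
    (U : Type*) [AddCommGroup U] [Module ℝ U] [FiniteDimensional ℝ U]
    (I : U →ₗ[ℝ] U) (hI : I ∘ₗ I = -LinearMap.id)
    (G : U →ₗ[ℝ] Dual ℝ U)
    (hGsymm : ∀ u v, G u v = G v u)
    (hGpos : ∀ u, u ≠ 0 → 0 < G u u)
    (hKahler : ∀ u v, G (I u) (I v) = G u v)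
    (B : U →ₗ[ℝ] Dual ℝ U) (hBskew : ∀ u v, B u v = -B v u)
    (Ginv : Dual ℝ U →ₗ[ℝ] U)
    (hGinv₁ : G ∘ₗ Ginv = LinearMap.id) (hGinv₂ : Ginv ∘ₗ G = LinearMap.id)
    (ωinv : Dual ℝ U →ₗ[ℝ] U)
    (hωinv₁ : (G ∘ₗ I) ∘ₗ ωinv = LinearMap.id) (hωinv₂ : ωinv ∘ₗ (G ∘ₗ I) = LinearMap.id)
    (𝓙 : (U × Dual ℝ U) →ₗ[ℝ] (U × Dual ℝ U))
    (h𝓙 : ∀ (u : U) (m : Dual ℝ U),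
      𝓙 (u, m) = (-(I (Ginv (B u))) + I (Ginv m),
        G (I u) - B (I (Ginv (B u))) + B (I (Ginv m)))) :
    (∀ (u : U) (m : Dual ℝ U),
      𝓙 (u, m) = (ωinv (B u) - ωinv m,
        G (I u) + B (ωinv (B u)) - B (ωinv m))) ∧
    (∀ (G₂ : U →ₗ[ℝ] Dual ℝ U) (I₂ : U →ₗ[ℝ] U) (Ginv₂ : Dual ℝ U →ₗ[ℝ] U),
      I₂ ∘ₗ I₂ = -LinearMap.id →
      (∀ u v, G₂ u v = G₂ v u) →
      (∀ u, u ≠ 0 → 0 < G₂ u u) →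
      (∀ u v, G₂ (I₂ u) (I₂ v) = G₂ u v) →
      G₂ ∘ₗ Ginv₂ = LinearMap.id → Ginv₂ ∘ₗ G₂ = LinearMap.id →
      G₂ ∘ₗ I₂ = G ∘ₗ I →
      ∀ (u : U) (m : Dual ℝ U),
        ((-(I₂ (Ginv₂ (B u))) + I₂ (Ginv₂ m),
          G₂ (I₂ u) - B (I₂ (Ginv₂ (B u))) + B (I₂ (Ginv₂ m))) : U × Dual ℝ U)
          = 𝓙 (u, m)) := by
  have h𝓙ω : ∀ (u : U) (m : Dual ℝ U),
      𝓙 (u, m) = (ωinv (B u) - ωinv m, G (I u) + B (ωinv (B u)) - B (ωinv m)) := by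
    intro u m
    rw [h𝓙]
    simp only [comp_inv_eq_neg_omegaInv hI hGinv₁ hωinv₂, map_neg, neg_neg, sub_neg_eq_add,
      ← sub_eq_add_neg]
  refine ⟨h𝓙ω, ?_⟩
  intro G₂ I₂ Ginv₂ hI₂ _ _ _ hGinv₂₁ _ hω u m
  -- `ωinv` is also a left inverse of `G₂ ∘ I₂`, so it gives `I₂ G₂⁻¹` too.
  have hωinv' : ωinv ∘ₗ (G₂ ∘ₗ I₂) = LinearMap.id := by rw [hω, hωinv₂]
  have hGI : G₂ (I₂ u) = G (I u) := LinearMap.congr_fun hω u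
  rw [h𝓙ω]
  simp only [comp_inv_eq_neg_omegaInv hI₂ hGinv₂₁ hωinv', hGI, map_neg, neg_neg, sub_neg_eq_add,
    ← sub_eq_add_neg]
end

section
/- Let U be a finite-dimensional real vector space, I : U → U a complex structure (I ∘ I = −id), G : U → U* symmetric positive definite and Kähler with respect to I (G(Iu)(Iv) = G(u)(v)), and B : U → U* skew-symmetric. Define the symmetric bilinear form q on U ⊕ U* by q((u,m),(u',m')) = m'(u) + m(u'), and the endomorphism 𝓙(G,I,B) of U ⊕ U* by 𝓙(G,I,B)(u, m) = (−I G⁻¹ B u + I G⁻¹ m, (G I − B I G⁻¹ B) u + B I G⁻¹ m). Then 𝓙(G,I,B) preserves q: q(𝓙(G,I,B) x, 𝓙(G,I,B) y) = q(x, y) for all x, y ∈ U ⊕ U*. -/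
open Module

/-!
Writing `x = (u, m)` as `m = G w + B u` with `w = G⁻¹ (m - B u)`, the map becomes
`𝓙 (u, G w + B u) = (I w, G (I u) + B (I w))`. In these coordinates the skew form `B` cancels
from the pairing, so `q (x, y) = G w' u + G w u'`, and `q (𝓙 x, 𝓙 y)` is the same expression with
`I` applied to every vector. The Kähler condition then gives the equality.
-/

/-- The complex structure `𝓙(G,I,B)` on `U ⊕ U*` preserves the natural symmetric pairing
`q((u,m),(u',m')) = m'(u) + m(u')`. -/
theorem calJ_preserves_q
    (U : Type*) [AddCommGroup U] [Module ℝ U] [FiniteDimensional ℝ U]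
    (I : U →ₗ[ℝ] U) (hI : I ∘ₗ I = -LinearMap.id)
    (G : U →ₗ[ℝ] Dual ℝ U)
    (hGsymm : ∀ u v, G u v = G v u)
    (hGpos : ∀ u, u ≠ 0 → 0 < G u u)
    (hKahler : ∀ u v, G (I u) (I v) = G u v)
    (B : U →ₗ[ℝ] Dual ℝ U) (hBskew : ∀ u v, B u v = -B v u)
    (Ginv : Dual ℝ U →ₗ[ℝ] U)
    (hGinv₁ : G ∘ₗ Ginv = LinearMap.id) (hGinv₂ : Ginv ∘ₗ G = LinearMap.id)
    (𝓙 : (U × Dual ℝ U) →ₗ[ℝ] (U × Dual ℝ U))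
    (h𝓙 : ∀ (u : U) (m : Dual ℝ U),
      𝓙 (u, m) = (-(I (Ginv (B u))) + I (Ginv m),
        G (I u) - B (I (Ginv (B u))) + B (I (Ginv m)))) :
    ∀ x y : U × Dual ℝ U,
      (𝓙 y).2 (𝓙 x).1 + (𝓙 x).2 (𝓙 y).1 = y.2 x.1 + x.2 y.1 := by
  rintro ⟨u, m⟩ ⟨u', m'⟩
  have key : ∀ (u : U) (m : Dual ℝ U), ∃ w : U,
      m = G w + B u ∧ 𝓙 (u, m) = (I w, G (I u) + B (I w)) := by
    intro u m
    refine ⟨Ginv (m - B u), ?_, ?_⟩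
    · have h : G (Ginv (m - B u)) = m - B u := LinearMap.congr_fun hGinv₁ (m - B u)
      rw [h, sub_add_cancel]
    · rw [h𝓙]
      simp only [map_sub]
      ext1
      · exact neg_add_eq_sub _ _
      · dsimp only
        abel
  obtain ⟨w, hm, hJ⟩ := key u m
  obtain ⟨w', hm', hJ'⟩ := key u' m'
  rw [hJ, hJ', hm, hm']
  simp only [LinearMap.add_apply, hKahler]
  linarith [hGsymm u w', hGsymm u' w, hBskew u u', hBskew (I w) (I w')]
end

section
/- Let V be a real vector space of dimension 2n, let β be a nondegenerate alternating bilinear form on V, and let ω ∈ ⋀² V* be the exterior 2-form corresponding to β. Then the linear map ⋀ⁿ V* → ⋀ⁿ⁺² V* given by x ↦ x ∧ ω is surjective. -/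
open Module ExteriorAlgebra

/-!
The proof is the `sl₂` argument behind the hard Lefschetz theorem, carried out on the whole
exterior algebra of `V*`. Write `L x = ω ∧ x`, let `d v` be contraction with `v ∈ V`, and let `N`
be the number operator `x ↦ ∑ i, bᵢ* ∧ d bᵢ x`, which acts on `⋀ᵐ V*` as multiplication by `m`.
The form `β` gives an isomorphism `V ≃ V*` with inverse `S`, and the dual Lefschetz operator is
`Λ = ∑ i, d bᵢ ∘ d (S bᵢ*)`. Since `d v ω = β v`, the antiderivation rule and the skew-symmetry of
`β` yield `Λ L - L Λ = 2 (n - N)` (`lefschetz_comm`), while `N` has weight `2` on `L` and `-2`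
on `Λ`.

Given these relations, if `N y = m y` with `m > n`, then
`Λ Lʲ⁺¹ y = Lʲ⁺¹ Λ y + 2 (j + 1) (n - m - j) Lʲ y` with a nonzero coefficient. Hence when
`Lʲ⁺¹ y = 0`, the vector `L Λ y + 2 (j + 1) (n - m - j) y` has weight `m` and is killed by `Lʲ`;
induction on `j` shows that it, and so `y`, lies in the range of `L`
(`mem_range_of_pow_eq_zero`). As `ω` is nilpotent, every `y ∈ ⋀ⁿ⁺² V*` is of the form `ω ∧ x`, and
taking the component of `x` of degree `n` finishes the proof.
-/

namespace WedgeOmega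

section Sl2

variable {E : Type*} [AddCommGroup E] [Module ℝ E] {L Λ N : E →ₗ[ℝ] E} {n : ℝ}

lemma weight_pow (hNL : ∀ x, N (L x) = L (N x) + (2 : ℝ) • L x) {m : ℝ} {y : E}
    (hy : N y = m • y) (j : ℕ) : N ((L ^ j) y) = (m + 2 * j) • (L ^ j) y := by
  induction j with
  | zero => simp [hy]
  | succ j ih =>
    rw [pow_succ', Module.End.mul_apply, hNL, ih, map_smul]
    push_cast
    module

lemma lowering_pow (hΛL : ∀ x, Λ (L x) = L (Λ x) + (2 * n) • x - (2 : ℝ) • N x)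
    (hNL : ∀ x, N (L x) = L (N x) + (2 : ℝ) • L x) {m : ℝ} {y : E}
    (hy : N y = m • y) (j : ℕ) :
    Λ ((L ^ (j + 1)) y) = (L ^ (j + 1)) (Λ y) + (2 * (j + 1) * (n - m - j)) • (L ^ j) y := by
  induction j with
  | zero =>
    simp only [zero_add, pow_one, pow_zero, hΛL, hy, Module.End.one_apply, Nat.cast_zero]
    module
  | succ j ih =>
    rw [pow_succ' L (j + 1), Module.End.mul_apply, hΛL, ih, weight_pow hNL hy, map_add, map_smul,
      ← Module.End.mul_apply L (L ^ j), ← pow_succ', Module.End.mul_apply]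
    push_cast
    module

/-- In an `sl₂`-module normalised so that `[Λ, L] = 2 (n - N)`, a vector of weight above the
middle weight `n` that is killed by some power of the raising operator `L` is in its range. -/
lemma mem_range_of_pow_eq_zero
    (hΛL : ∀ x, Λ (L x) = L (Λ x) + (2 * n) • x - (2 : ℝ) • N x)
    (hNL : ∀ x, N (L x) = L (N x) + (2 : ℝ) • L x)
    (hΛN : ∀ x, Λ (N x) = N (Λ x) + (2 : ℝ) • Λ x) {m : ℝ} (hm : n < m) (j : ℕ) :
    ∀ y : E, N y = m • y → (L ^ j) y = 0 → y ∈ LinearMap.range L := by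
  induction j with
  | zero =>
    intro y _ h
    rw [pow_zero, Module.End.one_apply] at h
    exact h ▸ Submodule.zero_mem _
  | succ j ih =>
    intro y hy h
    have key := lowering_pow hΛL hNL hy j
    rw [h, map_zero] at key
    set c : ℝ := 2 * (j + 1) * (n - m - j) with hc
    have hc0 : c ≠ 0 := by
      have hj : (0 : ℝ) ≤ j := j.cast_nonneg
      exact mul_ne_zero (by positivity) (by linarith)
    have hNΛ : N (Λ y) = m • Λ y - (2 : ℝ) • Λ y := by
      rw [← map_smul Λ m, ← hy, hΛN]; module
    have hz := ih (L (Λ y) + c • y)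
      (by rw [map_add, hNL, hNΛ, map_smul, hy, map_sub, map_smul, map_smul]; module)
      (by rw [map_add, map_smul, ← Module.End.mul_apply, ← pow_succ]; exact key.symm)
    have hcy : c • y ∈ LinearMap.range L :=
      (Submodule.add_mem_iff_right _ (LinearMap.mem_range_self L (Λ y))).1 hz
    exact (Submodule.smul_mem_iff _ hc0).1 hcy

end Sl2

section Operators

variable {V : Type*} [AddCommGroup V] [Module ℝ V]

/-- Contraction of an exterior form with the vector `v`: the antiderivation of the exterior
algebra of `V*` that evaluates covectors at `v`. -/
noncomputable def contr (v : V) :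
    ExteriorAlgebra ℝ (Dual ℝ V) →ₗ[ℝ] ExteriorAlgebra ℝ (Dual ℝ V) :=
  CliffordAlgebra.contractLeft (Dual.eval ℝ V v)

lemma contr_ι_mul (v : V) (φ : Dual ℝ V) (x : ExteriorAlgebra ℝ (Dual ℝ V)) :
    contr v (ι ℝ φ * x) = φ v • x - ι ℝ φ * contr v x :=
  CliffordAlgebra.contractLeft_ι_mul _ _ _

lemma contr_comm (v w : V) (x : ExteriorAlgebra ℝ (Dual ℝ V)) :
    contr v (contr w x) = -contr w (contr v x) :=
  CliffordAlgebra.contractLeft_comm _ _ _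

lemma contr_sum_smul {I : Type*} (s : Finset I) (a : I → ℝ) (u : I → V)
    (x : ExteriorAlgebra ℝ (Dual ℝ V)) :
    contr (∑ i ∈ s, a i • u i) x = ∑ i ∈ s, a i • contr (u i) x := by
  simp [contr, map_sum, LinearMap.sum_apply]

lemma ι_mul_ι_mul (φ ψ : Dual ℝ V) (x : ExteriorAlgebra ℝ (Dual ℝ V)) :
    ι ℝ φ * (ι ℝ ψ * x) = -(ι ℝ ψ * (ι ℝ φ * x)) := by
  have h := ι_add_mul_swap (R := ℝ) φ ψ
  rw [← mul_assoc, ← mul_assoc, eq_neg_iff_add_eq_zero, ← add_mul, h, zero_mul]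

/-- Linear conditions on 2-forms need only be checked on decomposable ones. -/
lemma two_form_induction {p : ExteriorAlgebra ℝ (Dual ℝ V) → Prop}
    (h : ∀ φ ψ, p (ι ℝ φ * ι ℝ ψ)) (hadd : ∀ a b, p a → p b → p (a + b))
    {ω : ExteriorAlgebra ℝ (Dual ℝ V)} (hω : ω ∈ ⋀[ℝ]^2 (Dual ℝ V)) : p ω := by
  rw [exteriorPower, pow_two] at hω
  refine Submodule.mul_induction_on hω ?_ hadd
  rintro _ ⟨φ, rfl⟩ _ ⟨ψ, rfl⟩
  exact h φ ψ

lemma two_form_comm {ω : ExteriorAlgebra ℝ (Dual ℝ V)} (hω : ω ∈ ⋀[ℝ]^2 (Dual ℝ V))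
    (x : ExteriorAlgebra ℝ (Dual ℝ V)) : x * ω = ω * x := by
  refine two_form_induction (p := fun ω => x * ω = ω * x) (fun φ ψ => ?_)
    (fun a b ha hb => by rw [mul_add, add_mul, ha, hb]) hω
  induction x using CliffordAlgebra.left_induction with
  | algebraMap r => exact Algebra.commutes _ _
  | add a b ha hb => rw [mul_add, add_mul, ha, hb]
  | ι_mul a φ' ha =>
    change ι ℝ φ' * a * _ = _ * (ι ℝ φ' * a)
    rw [mul_assoc, ha, mul_assoc, mul_assoc, ι_mul_ι_mul φ' φ, ι_mul_ι_mul φ' ψ, mul_neg, neg_neg]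

/-- Contraction with `v` satisfies the Leibniz rule across a 2-form `ω`, and sends `ω` to the
covector `β v`. -/
lemma contr_two_form_mul
    (T : ExteriorAlgebra ℝ (Dual ℝ V) →ₗ[ℝ] (V →ₗ[ℝ] V →ₗ[ℝ] ℝ))
    (hT : ∀ (φ ψ : Dual ℝ V) (v w : V),
      T (ι ℝ φ * ι ℝ ψ) v w = φ v * ψ w - φ w * ψ v)
    {ω : ExteriorAlgebra ℝ (Dual ℝ V)} (hω : ω ∈ ⋀[ℝ]^2 (Dual ℝ V))
    (v : V) (x : ExteriorAlgebra ℝ (Dual ℝ V)) :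
    contr v (ω * x) = ι ℝ (T ω v : Dual ℝ V) * x + ω * contr v x := by
  refine two_form_induction
    (p := fun ω => contr v (ω * x) = ι ℝ (T ω v : Dual ℝ V) * x + ω * contr v x)
    (fun φ ψ => ?_) (fun a b ha hb => ?_) hω
  · have h : (T (ι ℝ φ * ι ℝ ψ) v : Dual ℝ V) = φ v • ψ - ψ v • φ := by
      ext w
      simp [hT, mul_comm]
    rw [h, mul_assoc, contr_ι_mul, contr_ι_mul, map_sub, map_smul, map_smul, sub_mul,
      smul_mul_assoc, smul_mul_assoc, mul_sub, mul_smul_comm, mul_assoc]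
    abel
  · rw [add_mul, map_add, ha, hb, map_add, LinearMap.add_apply, map_add]
    noncomm_ring

variable {I : Type*} [Fintype I] (b : Basis I ℝ V)

/-- The number operator `x ↦ ∑ i, bᵢ* ∧ (bᵢ ⌋ x)`. -/
noncomputable def number :
    ExteriorAlgebra ℝ (Dual ℝ V) →ₗ[ℝ] ExteriorAlgebra ℝ (Dual ℝ V) :=
  ∑ i, LinearMap.mulLeft ℝ (ι ℝ (b.coord i)) ∘ₗ contr (b i)

lemma number_apply (x : ExteriorAlgebra ℝ (Dual ℝ V)) :
    number b x = ∑ i, ι ℝ (b.coord i) * contr (b i) x := by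
  simp [number, LinearMap.sum_apply]

lemma sum_coord (φ : Dual ℝ V) : ∑ i, φ (b i) • b.coord i = φ :=
  b.ext fun j => by simp

lemma number_ι_mul (φ : Dual ℝ V) (x : ExteriorAlgebra ℝ (Dual ℝ V)) :
    number b (ι ℝ φ * x) = ι ℝ φ * x + ι ℝ φ * number b x := by
  simp only [number_apply, contr_ι_mul, mul_sub, Finset.sum_sub_distrib, Finset.mul_sum]
  rw [sub_eq_add_neg, ← Finset.sum_neg_distrib]
  congr 1
  · conv_rhs => rw [← sum_coord b φ, map_sum, Finset.sum_mul]
    exact Finset.sum_congr rfl fun i _ => by rw [map_smul, smul_mul_assoc, mul_smul_comm]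
  · exact Finset.sum_congr rfl fun i _ => by rw [ι_mul_ι_mul, neg_neg]

lemma number_of_mem {m : ℕ} {x : ExteriorAlgebra ℝ (Dual ℝ V)}
    (hx : x ∈ ⋀[ℝ]^m (Dual ℝ V)) : number b x = (m : ℝ) • x := by
  rw [exteriorPower] at hx
  induction hx using Submodule.pow_induction_on_left' with
  | algebraMap r =>
    have h (v : V) : contr v (algebraMap ℝ (ExteriorAlgebra ℝ (Dual ℝ V)) r) = 0 :=
      CliffordAlgebra.contractLeft_algebraMap _ _ _
    simp [number_apply, h]
  | add x y i hx hy ihx ihy => rw [map_add, ihx, ihy, smul_add]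
  | mem_mul a ha i x hx ih =>
    obtain ⟨φ, rfl⟩ := ha
    rw [number_ι_mul, ih, mul_smul_comm]
    push_cast
    module

lemma number_two_form_mul {ω : ExteriorAlgebra ℝ (Dual ℝ V)} (hω : ω ∈ ⋀[ℝ]^2 (Dual ℝ V))
    (x : ExteriorAlgebra ℝ (Dual ℝ V)) :
    number b (ω * x) = ω * number b x + (2 : ℝ) • (ω * x) := by
  refine two_form_induction
    (p := fun ω => number b (ω * x) = ω * number b x + (2 : ℝ) • (ω * x))
    (fun φ ψ => ?_) (fun c d hc hd => ?_) hω
  · rw [mul_assoc, number_ι_mul, number_ι_mul, mul_add, mul_assoc]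
    module
  · rw [add_mul, map_add, hc, hd, add_mul]
    module

lemma contr_number (v : V) (x : ExteriorAlgebra ℝ (Dual ℝ V)) :
    contr v (number b x) = number b (contr v x) + contr v x := by
  simp only [number_apply, map_sum, contr_ι_mul, Finset.sum_sub_distrib]
  have h : ∑ i, b.coord i v • contr (b i) x = contr v x := by
    rw [← contr_sum_smul]
    simp [b.sum_repr]
  rw [h, sub_eq_add_neg, ← Finset.sum_neg_distrib, add_comm]
  congr 1
  exact Finset.sum_congr rfl fun i _ => by rw [contr_comm, mul_neg, neg_neg]

/-- The dual Lefschetz operator `∑ i, d bᵢ ∘ d (S bᵢ*)`, that is, contraction with the bivector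
defined by `S : V* → V`. -/
noncomputable def lowering (S : Dual ℝ V →ₗ[ℝ] V) :
    ExteriorAlgebra ℝ (Dual ℝ V) →ₗ[ℝ] ExteriorAlgebra ℝ (Dual ℝ V) :=
  ∑ i, contr (b i) ∘ₗ contr (S (b.coord i))

lemma lowering_apply (S : Dual ℝ V →ₗ[ℝ] V) (x : ExteriorAlgebra ℝ (Dual ℝ V)) :
    lowering b S x = ∑ i, contr (b i) (contr (S (b.coord i)) x) := by
  simp [lowering, LinearMap.sum_apply]

lemma lowering_number (S : Dual ℝ V →ₗ[ℝ] V) (x : ExteriorAlgebra ℝ (Dual ℝ V)) :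
    lowering b S (number b x) = number b (lowering b S x) + (2 : ℝ) • lowering b S x := by
  simp only [lowering_apply, contr_number, map_add, map_sum, Finset.sum_add_distrib]
  module

/-- The commutator of the dual Lefschetz operator with multiplication by `ω`, where `S` is the
inverse of `β : V → V*`. -/
lemma lefschetz_comm
    (T : ExteriorAlgebra ℝ (Dual ℝ V) →ₗ[ℝ] (V →ₗ[ℝ] V →ₗ[ℝ] ℝ))
    (hT : ∀ (φ ψ : Dual ℝ V) (v w : V),
      T (ι ℝ φ * ι ℝ ψ) v w = φ v * ψ w - φ w * ψ v)
    {ω : ExteriorAlgebra ℝ (Dual ℝ V)} (hω : ω ∈ ⋀[ℝ]^2 (Dual ℝ V))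
    (hskew : ∀ v w, T ω v w = -T ω w v) (S : Dual ℝ V →ₗ[ℝ] V)
    (hBS : ∀ φ : Dual ℝ V, T ω (S φ) = φ) (hSB : ∀ v, S (T ω v) = v)
    (x : ExteriorAlgebra ℝ (Dual ℝ V)) :
    lowering b S (ω * x) =
      ω * lowering b S x + (Fintype.card I : ℝ) • x - (2 : ℝ) • number b x := by
  have h1 : ∑ i, ι ℝ (T ω (b i) : Dual ℝ V) * contr (S (b.coord i)) x = -number b x := by
    have e (i : I) : ι ℝ (T ω (b i) : Dual ℝ V) * contr (S (b.coord i)) x =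
        ∑ j, ι ℝ (b.coord j) * (T ω (b i) (b j) • contr (S (b.coord i)) x) := by
      conv_lhs => rw [← sum_coord b (T ω (b i)), map_sum, Finset.sum_mul]
      exact Finset.sum_congr rfl fun j _ => by rw [map_smul, smul_mul_assoc, mul_smul_comm]
    -- Skew-symmetry turns the column sum over `i` into `-S (β bⱼ) = -bⱼ`.
    have f (j : I) : ∑ i, T ω (b i) (b j) • contr (S (b.coord i)) x = -contr (b j) x := by
      have g : ∑ i, T ω (b j) (b i) • S (b.coord i) = b j := by
        conv_rhs => rw [← hSB (b j), ← sum_coord b (T ω (b j)), map_sum]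
        simp only [map_smul]
      conv_rhs => rw [← g, contr_sum_smul, ← Finset.sum_neg_distrib]
      exact Finset.sum_congr rfl fun i _ => by rw [hskew, neg_smul]
    simp only [e]
    rw [Finset.sum_comm]
    simp only [← Finset.mul_sum, f, mul_neg, Finset.sum_neg_distrib, number_apply]
  have h2 (i : I) : contr (b i) (contr (S (b.coord i)) (ω * x)) =
      x - ι ℝ (b.coord i) * contr (b i) x + (ι ℝ (T ω (b i) : Dual ℝ V) * contr (S (b.coord i)) x
        + ω * contr (b i) (contr (S (b.coord i)) x)) := by
    rw [contr_two_form_mul T hT hω, hBS, map_add, contr_ι_mul, contr_two_form_mul T hT hω]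
    simp
  rw [lowering_apply]
  simp only [h2, Finset.sum_add_distrib, Finset.sum_sub_distrib, h1, ← number_apply,
    ← Finset.mul_sum, ← lowering_apply]
  rw [Finset.sum_const, Finset.card_univ, ← Nat.cast_smul_eq_nsmul ℝ]
  module

lemma pow_eq_zero_of_finrank_lt [FiniteDimensional ℝ V] {ω : ExteriorAlgebra ℝ (Dual ℝ V)}
    (hω : ω ∈ ⋀[ℝ]^2 (Dual ℝ V)) {j : ℕ} (hj : finrank ℝ V < 2 * j) : ω ^ j = 0 := by
  have h : ω ^ j ∈ ⋀[ℝ]^(2 * j) (Dual ℝ V) := by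
    rw [exteriorPower, pow_mul]
    exact Submodule.pow_mem_pow _ hω j
  have h0 : finrank ℝ (⋀[ℝ]^(2 * j) (Dual ℝ V)) = 0 := by
    rw [exteriorPower.finrank_eq, Subspace.dual_finrank_eq, Nat.choose_eq_zero_of_lt hj]
  rw [Submodule.finrank_eq_zero.1 h0] at h
  exact (Submodule.mem_bot ℝ).1 h

end Operators

end WedgeOmega

/-- For a symplectic vector space of dimension `2n` (nondegenerate alternating form `β`
corresponding to `ω ∈ ⋀² V*`), wedging with `ω` is surjective from `⋀ⁿ V*` to `⋀ⁿ⁺² V*`. -/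
theorem wedge_omega_surjective
    (V : Type*) [AddCommGroup V] [Module ℝ V] [FiniteDimensional ℝ V]
    (n : ℕ) (hdim : finrank ℝ V = 2 * n)
    (ω : ExteriorAlgebra ℝ (Dual ℝ V)) (hω : ω ∈ ⋀[ℝ]^2 (Dual ℝ V))
    -- `T` sends an element of the exterior algebra of `V*` to the corresponding
    -- multilinear form; on `⋀²` it realizes the correspondence `ω ↔ β`.
    (T : ExteriorAlgebra ℝ (Dual ℝ V) →ₗ[ℝ] (V →ₗ[ℝ] V →ₗ[ℝ] ℝ))
    (hT : ∀ (φ ψ : Dual ℝ V) (v w : V),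
      T (ι ℝ φ * ι ℝ ψ) v w = φ v * ψ w - φ w * ψ v)
    -- `β = T ω` is alternating and nondegenerate:
    (hβalt : ∀ v : V, T ω v v = 0)
    (hβnd : ∀ v : V, (∀ w : V, T ω v w = 0) → v = 0)
    (F : ⋀[ℝ]^n (Dual ℝ V) →ₗ[ℝ] ⋀[ℝ]^(n + 2) (Dual ℝ V))
    (hF : ∀ x : ⋀[ℝ]^n (Dual ℝ V),
      (F x : ExteriorAlgebra ℝ (Dual ℝ V)) = (x : ExteriorAlgebra ℝ (Dual ℝ V)) * ω) :
    Function.Surjective F := by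
  let B : V →ₗ[ℝ] Dual ℝ V := T ω
  have hB : Function.Injective B := by
    refine (injective_iff_map_eq_zero B).2 fun v hv => hβnd v fun w => ?_
    exact LinearMap.congr_fun hv w
  let e : V ≃ₗ[ℝ] Dual ℝ V :=
    LinearEquiv.ofInjectiveOfFinrankEq B hB Subspace.dual_finrank_eq.symm
  have hskew (v w : V) : T ω v w = -T ω w v := by
    have h := hβalt (v + w)
    simp only [map_add, LinearMap.add_apply, hβalt] at h
    linarith
  let b := finBasis ℝ V
  let L := LinearMap.mulLeft ℝ ω
  have hΛL (x : ExteriorAlgebra ℝ (Dual ℝ V)) :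
      WedgeOmega.lowering b e.symm (L x) =
        L (WedgeOmega.lowering b e.symm x) + (2 * (n : ℝ)) • x
          - (2 : ℝ) • WedgeOmega.number b x := by
    have h := WedgeOmega.lefschetz_comm b T hT hω hskew e.symm
      (fun φ => e.apply_symm_apply φ) (fun v => e.symm_apply_apply v) x
    have hcard : (Fintype.card (Fin (finrank ℝ V)) : ℝ) = 2 * n := by
      rw [Fintype.card_fin, hdim]
      push_cast
      rfl
    rw [hcard] at h
    exact h
  rintro ⟨y, hy⟩
  -- `ω ^ (n + 1)` has degree `2 n + 2 > dim V`.
  have hLy : (L ^ (n + 1)) y = 0 := by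
    rw [LinearMap.pow_mulLeft, WedgeOmega.pow_eq_zero_of_finrank_lt hω (by omega)]
    simp
  obtain ⟨x, hx⟩ := WedgeOmega.mem_range_of_pow_eq_zero hΛL (WedgeOmega.number_two_form_mul b hω)
    (WedgeOmega.lowering_number b e.symm) (m := ((n + 2 : ℕ) : ℝ)) (by push_cast; linarith)
    (n + 1) y (WedgeOmega.number_of_mem b hy) hLy
  have hxy : x * ω = y := (WedgeOmega.two_form_comm hω x).trans hx
  -- `x` need not be homogeneous; its component of degree `n` is a preimage of `y`.
  refine ⟨DirectSum.decompose (fun i : ℕ => ⋀[ℝ]^i (Dual ℝ V)) x n, Subtype.ext ?_⟩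
  rw [hF, ← DirectSum.coe_decompose_mul_add_of_right_mem (fun i : ℕ => ⋀[ℝ]^i (Dual ℝ V)) hω,
    hxy]
  exact DirectSum.decompose_of_mem_same (fun i : ℕ => ⋀[ℝ]^i (Dual ℝ V)) hy
end

section
/- Let V be a real vector space of dimension 2n (with n ≥ 2), let β be a nondegenerate alternating bilinear form on V, and let ω ∈ ⋀² V* be the corresponding exterior 2-form. Then the kernel of the linear map ⋀ⁿ V* → ⋀ⁿ⁺² V*, x ↦ x ∧ ω, has dimension binom(2n, n) − binom(2n, n+2). -/
open Module ExteriorAlgebra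

/-!
Since `dim ⋀ᵏ V* = binom(2n, k)`, rank-nullity reduces the claim to the surjectivity of
`x ↦ x ∧ ω` from `⋀ⁿ V*` to `⋀ⁿ⁺² V*`, which is proved with the `sl₂`-relations of the Lefschetz
theory.

Let `B : V ≃ V*` be the isomorphism `v ↦ β(v, ·)`, let `eᵢ` be a basis of `V` with dual basis `eⁱ`,
and let `Λ = ∑ᵢ ι(eᵢ) ι(B⁻¹ eⁱ)`, where `ι(v)` is the contraction with `v`. Contractions are
antiderivations and `ι(v) ω = B v`, so Euler's identity `∑ᵢ eⁱ ∧ ι(eᵢ) x = k x` on `⋀ᵏ V*`, used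
for the bases `eᵢ` and `B⁻¹ eⁱ`, gives `Λ(ω x) = ω Λ x + 2(n - k) x` (`lefschetzDual_omega_mul`).
Iterating,
`Λ(ωʲ⁺¹ x) = ωʲ⁺¹ Λ x + 2(j + 1)(n - k - j) ωʲ x` (`lefschetzDual_omega_pow_mul`).

If `k > n`, the last coefficient never vanishes. Hence `ωʲ⁺¹ x = 0` implies that `ωʲ` kills
`x + c ω Λ x` for a suitable scalar `c`, and induction on `j` shows that `x` is a multiple of `ω`
as soon as some power of `ω` kills it (`exists_omega_mul_eq`). This always happens, because
`⋀ᵐ V* = 0` for `m > 2n`.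
-/

section Contraction

variable {V : Type*} [AddCommGroup V] [Module ℝ V]

/-- The contraction (interior product) of exterior forms on `V` with a vector `v`. -/
noncomputable def contr (v : V) :
    ExteriorAlgebra ℝ (Dual ℝ V) →ₗ[ℝ] ExteriorAlgebra ℝ (Dual ℝ V) :=
  CliffordAlgebra.contractLeft (Q := (0 : QuadraticForm ℝ (Dual ℝ V))) (Dual.eval ℝ V v)

lemma contr_ι_mul (v : V) (φ : Dual ℝ V) (x : ExteriorAlgebra ℝ (Dual ℝ V)) :
    contr v (ι ℝ φ * x) = φ v • x - ι ℝ φ * contr v x :=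
  CliffordAlgebra.contractLeft_ι_mul _ _ _

lemma contr_algebraMap (v : V) (r : ℝ) : contr v (algebraMap ℝ _ r) = 0 :=
  CliffordAlgebra.contractLeft_algebraMap _ _ _

/-- In degree `0` the contraction vanishes, so the truncated `k - 1` is harmless. -/
lemma contr_mem (v : V) {k : ℕ} {x : ExteriorAlgebra ℝ (Dual ℝ V)}
    (hx : x ∈ ⋀[ℝ]^k (Dual ℝ V)) : contr v x ∈ ⋀[ℝ]^(k - 1) (Dual ℝ V) := by
  induction hx using Submodule.pow_induction_on_left' with
  | algebraMap r => rw [contr_algebraMap]; exact zero_mem _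
  | add x y i hx hy ihx ihy => rw [map_add]; exact add_mem ihx ihy
  | mem_mul m hm i x hx ih =>
    obtain ⟨φ, rfl⟩ := hm
    rw [contr_ι_mul]
    refine sub_mem (Submodule.smul_mem _ _ hx) ?_
    rcases i with _ | i
    · obtain ⟨r, rfl⟩ := Submodule.mem_one.mp (by simpa using hx)
      rw [contr_algebraMap, mul_zero]; exact zero_mem _
    · change _ ∈ LinearMap.range (ι ℝ) ^ (i + 1)
      rw [pow_succ']
      exact Submodule.mul_mem_mul ⟨φ, rfl⟩ ih

/-- Euler's identity: a `k`-form `x` satisfies `∑ᵢ eⁱ ∧ ι(eᵢ) x = k x`. -/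
lemma sum_coord_mul_contr {I : Type*} [Fintype I] (b : Basis I ℝ V) {k : ℕ}
    {x : ExteriorAlgebra ℝ (Dual ℝ V)} (hx : x ∈ ⋀[ℝ]^k (Dual ℝ V)) :
    ∑ i, ι ℝ (b.coord i) * contr (b i) x = (k : ℝ) • x := by
  induction hx using Submodule.pow_induction_on_left' with
  | algebraMap r => simp [contr_algebraMap]
  | add x y i hx hy ihx ihy => simp [mul_add, Finset.sum_add_distrib, ihx, ihy]
  | mem_mul m hm k x hx ih =>
    obtain ⟨φ, rfl⟩ := hm
    have hφ : ∑ i, φ (b i) • b.coord i = φ := b.ext fun j => by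
      simp
    have h1 : ∀ i, ι ℝ (b.coord i) * contr (b i) (ι ℝ φ * x) =
        ι ℝ (φ (b i) • b.coord i) * x + ι ℝ φ * (ι ℝ (b.coord i) * contr (b i) x) := by
      intro i
      have h2 : ι ℝ (b.coord i) * ι ℝ φ = -(ι ℝ φ * ι ℝ (b.coord i)) :=
        eq_neg_of_add_eq_zero_left (ι_add_mul_swap _ _)
      rw [contr_ι_mul, mul_sub, ← mul_assoc, h2, map_smul]
      simp [mul_assoc]
    rw [Finset.sum_congr rfl fun i _ => h1 i, Finset.sum_add_distrib, ← Finset.sum_mul,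
      ← map_sum, hφ, ← Finset.mul_sum, ih]
    push_cast
    rw [add_smul, one_smul, mul_smul_comm, add_comm]

lemma two_form_induction {p : ExteriorAlgebra ℝ (Dual ℝ V) → Prop}
    (hmul : ∀ φ ψ, p (ι ℝ φ * ι ℝ ψ)) (hadd : ∀ x y, p x → p y → p (x + y))
    {ω : ExteriorAlgebra ℝ (Dual ℝ V)} (hω : ω ∈ ⋀[ℝ]^2 (Dual ℝ V)) : p ω := by
  change ω ∈ LinearMap.range (ι ℝ) ^ 2 at hω
  rw [pow_two] at hω
  induction hω using Submodule.mul_induction_on' with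
  | mem_mul_mem m hm n hn =>
    obtain ⟨φ, rfl⟩ := hm
    obtain ⟨ψ, rfl⟩ := hn
    exact hmul φ ψ
  | add x _ y _ hx hy => exact hadd x y hx hy

/-- Two-forms are central in the exterior algebra. -/
lemma two_form_mul_comm {ω : ExteriorAlgebra ℝ (Dual ℝ V)} (hω : ω ∈ ⋀[ℝ]^2 (Dual ℝ V))
    (x : ExteriorAlgebra ℝ (Dual ℝ V)) : ω * x = x * ω := by
  induction x using ExteriorAlgebra.induction with
  | algebraMap r => exact (Algebra.commutes r ω).symm
  | mul a b ha hb => rw [← mul_assoc, ha, mul_assoc, hb, mul_assoc]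
  | add a b ha hb => rw [mul_add, add_mul, ha, hb]
  | ι χ =>
    refine two_form_induction (p := fun ω => ω * ι ℝ χ = ι ℝ χ * ω)
      (fun φ ψ => ?_) (fun x y hx hy => ?_) hω
    · have swap : ∀ a b : Dual ℝ V, ι ℝ a * ι ℝ b = -(ι ℝ b * ι ℝ a) :=
        fun a b => eq_neg_of_add_eq_zero_left (ι_add_mul_swap _ _)
      rw [mul_assoc, swap ψ χ, mul_neg, ← mul_assoc, swap φ χ, neg_mul, neg_neg, mul_assoc]
    · rw [add_mul, mul_add, hx, hy]

/-- Contraction with `v` is a derivation for products with a two-form `ω`, and it maps `ω` to the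
linear form `w ↦ ω(v, w)`. -/
lemma contr_two_form_mul (T : ExteriorAlgebra ℝ (Dual ℝ V) →ₗ[ℝ] (V →ₗ[ℝ] V →ₗ[ℝ] ℝ))
    (hT : ∀ (φ ψ : Dual ℝ V) (v w : V),
      T (ι ℝ φ * ι ℝ ψ) v w = φ v * ψ w - φ w * ψ v)
    {ω : ExteriorAlgebra ℝ (Dual ℝ V)} (hω : ω ∈ ⋀[ℝ]^2 (Dual ℝ V)) (v : V)
    (x : ExteriorAlgebra ℝ (Dual ℝ V)) :
    contr v (ω * x) = ι ℝ (T ω v : Dual ℝ V) * x + ω * contr v x := by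
  refine two_form_induction
    (p := fun ω => contr v (ω * x) = ι ℝ (T ω v : Dual ℝ V) * x + ω * contr v x)
    (fun φ ψ => ?_) (fun a b ha hb => ?_) hω
  · have h : (T (ι ℝ φ * ι ℝ ψ) v : Dual ℝ V) = φ v • ψ - ψ v • φ := by
      ext w
      simp [hT, mul_comm]
    rw [h, mul_assoc, contr_ι_mul, contr_ι_mul, map_sub, map_smul, map_smul]
    simp only [mul_sub, sub_mul, smul_mul_assoc, mul_smul_comm, mul_assoc]
    abel
  · rw [add_mul, map_add, ha, hb, map_add, LinearMap.add_apply, map_add]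
    simp only [add_mul]
    abel

end Contraction

section Lefschetz

variable {V : Type*} [AddCommGroup V] [Module ℝ V] {I : Type*} [Fintype I]

/-- The dual Lefschetz operator `Λ = ∑ᵢ ι(eᵢ) ι(B⁻¹ eⁱ)` attached to a basis `eᵢ` of `V` and an
isomorphism `B : V ≃ V*`. The normalization is such that `Λ ω = ω Λ + 2(n - k)` on `k`-forms when
`ω` is the two-form given by `B`. -/
noncomputable def lefschetzDual (b : Basis I ℝ V) (B : V ≃ₗ[ℝ] Dual ℝ V) :
    ExteriorAlgebra ℝ (Dual ℝ V) →ₗ[ℝ] ExteriorAlgebra ℝ (Dual ℝ V) :=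
  ∑ i, contr (b i) ∘ₗ contr (B.symm (b.coord i))

variable (b : Basis I ℝ V) (B : V ≃ₗ[ℝ] Dual ℝ V)

lemma lefschetzDual_mem {k : ℕ} {x : ExteriorAlgebra ℝ (Dual ℝ V)}
    (hx : x ∈ ⋀[ℝ]^(k + 2) (Dual ℝ V)) : lefschetzDual b B x ∈ ⋀[ℝ]^k (Dual ℝ V) := by
  rw [lefschetzDual, LinearMap.sum_apply]
  exact sum_mem fun i _ => contr_mem _ (contr_mem _ hx)

/-- The `sl₂`-relation between `ω ∧ ·` and the dual Lefschetz operator. -/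
lemma lefschetzDual_omega_mul {n : ℕ} (hdim : finrank ℝ V = 2 * n)
    {ω : ExteriorAlgebra ℝ (Dual ℝ V)}
    (hanti : ∀ v w, B v w = - B w v)
    (hω : ∀ v x, contr v (ω * x) = ι ℝ (B v) * x + ω * contr v x)
    {k : ℕ} {x : ExteriorAlgebra ℝ (Dual ℝ V)} (hx : x ∈ ⋀[ℝ]^k (Dual ℝ V)) :
    lefschetzDual b B (ω * x) =
      ω * lefschetzDual b B x + (2 * ((n : ℝ) - k)) • x := by
  classical
  -- the basis `B⁻¹ eⁱ` of `V`, whose dual basis is `-B eᵢ` because `B` is skew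
  set b' : Basis I ℝ V := b.dualBasis.map B.symm with hb'
  have hb'_apply : ∀ i, b' i = B.symm (b.coord i) := fun i => by simp [hb']
  have hb'_coord : ∀ i, b'.coord i = -B (b i) := fun i => b'.ext fun j => by
    rw [Basis.coord_apply, Basis.repr_self, LinearMap.neg_apply, hanti, hb'_apply,
      LinearEquiv.apply_symm_apply, Basis.coord_apply, Basis.repr_self, neg_neg,
      Finsupp.single_apply, Finsupp.single_apply]
    simp only [eq_comm]
  have e1 := sum_coord_mul_contr b hx
  have e2 := sum_coord_mul_contr b' hx
  have hterm : ∀ i, contr (b i) (contr (B.symm (b.coord i)) (ω * x)) =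
      x - ι ℝ (b.coord i) * contr (b i) x - ι ℝ (b'.coord i) * contr (b' i) x
        + ω * contr (b i) (contr (B.symm (b.coord i)) x) := by
    intro i
    rw [hω, map_add, LinearEquiv.apply_symm_apply, contr_ι_mul, hω, hb'_coord, hb'_apply,
      map_neg]
    simp only [Basis.coord_apply, Basis.repr_self, Finsupp.single_eq_same, one_smul, neg_mul]
    abel
  have hcard : (Fintype.card I : ℝ) = 2 * n := by
    rw [← finrank_eq_card_basis b, hdim]; push_cast; ring
  simp only [lefschetzDual, LinearMap.sum_apply, LinearMap.comp_apply]
  rw [Finset.sum_congr rfl fun i _ => hterm i, Finset.sum_add_distrib, Finset.sum_sub_distrib,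
    Finset.sum_sub_distrib, e1, e2, Finset.mul_sum, Finset.sum_const, Finset.card_univ,
    ← Nat.cast_smul_eq_nsmul ℝ, hcard]
  module

lemma omega_pow_mul_mem {ω : ExteriorAlgebra ℝ (Dual ℝ V)} (hω : ω ∈ ⋀[ℝ]^2 (Dual ℝ V))
    (j : ℕ) {k : ℕ} {x : ExteriorAlgebra ℝ (Dual ℝ V)} (hx : x ∈ ⋀[ℝ]^k (Dual ℝ V)) :
    ω ^ j * x ∈ ⋀[ℝ]^(2 * j + k) (Dual ℝ V) := by
  change _ ∈ LinearMap.range (ι ℝ) ^ (2 * j + k)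
  rw [pow_add, pow_mul]
  exact Submodule.mul_mem_mul (Submodule.pow_mem_pow _ hω j) hx

lemma lefschetzDual_omega_pow_mul {n : ℕ} (hdim : finrank ℝ V = 2 * n)
    {ω : ExteriorAlgebra ℝ (Dual ℝ V)} (hω2 : ω ∈ ⋀[ℝ]^2 (Dual ℝ V))
    (hanti : ∀ v w, B v w = - B w v)
    (hω : ∀ v x, contr v (ω * x) = ι ℝ (B v) * x + ω * contr v x)
    {k : ℕ} {x : ExteriorAlgebra ℝ (Dual ℝ V)} (hx : x ∈ ⋀[ℝ]^k (Dual ℝ V)) (j : ℕ) :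
    lefschetzDual b B (ω ^ (j + 1) * x) = ω ^ (j + 1) * lefschetzDual b B x +
      (2 * ((j : ℝ) + 1) * ((n : ℝ) - k - j)) • (ω ^ j * x) := by
  induction j with
  | zero =>
    simpa using lefschetzDual_omega_mul b B hdim hanti hω hx
  | succ j ih =>
    rw [pow_succ', mul_assoc,
      lefschetzDual_omega_mul b B hdim hanti hω (omega_pow_mul_mem hω2 (j + 1) hx), ih,
      mul_add, mul_smul_comm, ← mul_assoc, ← mul_assoc ω (ω ^ j), ← pow_succ', ← pow_succ',
      add_assoc, ← add_smul]
    congr 2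
    push_cast
    ring

/-- A form of degree `k + 2 > n` killed by a power of `ω` is a multiple of `ω`. -/
lemma exists_omega_mul_eq (b : Basis I ℝ V) (B : V ≃ₗ[ℝ] Dual ℝ V) {n : ℕ} (hdim : finrank ℝ V = 2 * n)
    {ω : ExteriorAlgebra ℝ (Dual ℝ V)} (hω2 : ω ∈ ⋀[ℝ]^2 (Dual ℝ V))
    (hanti : ∀ v w, B v w = - B w v)
    (hω : ∀ v x, contr v (ω * x) = ι ℝ (B v) * x + ω * contr v x)
    {k : ℕ} (hk : n < k + 2) (j : ℕ) {x : ExteriorAlgebra ℝ (Dual ℝ V)}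
    (hx : x ∈ ⋀[ℝ]^(k + 2) (Dual ℝ V)) (hj : ω ^ j * x = 0) :
    ∃ y ∈ ⋀[ℝ]^k (Dual ℝ V), ω * y = x := by
  induction j generalizing x with
  | zero => exact ⟨0, zero_mem _, by simpa using hj.symm⟩
  | succ j ih =>
    have hcomm := lefschetzDual_omega_pow_mul b B hdim hω2 hanti hω hx j
    set c : ℝ := 2 * ((j : ℝ) + 1) * ((n : ℝ) - ((k + 2 : ℕ) : ℝ) - j) with hc
    have hc0 : c ≠ 0 := by
      have h1 : (n : ℝ) < ((k + 2 : ℕ) : ℝ) := by exact_mod_cast hk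
      have h2 : (0 : ℝ) ≤ j := j.cast_nonneg
      exact mul_ne_zero (by positivity) (by linarith)
    rw [hj, map_zero] at hcomm
    have hΛ : lefschetzDual b B x ∈ ⋀[ℝ]^k (Dual ℝ V) := lefschetzDual_mem b B hx
    have hωΛ : ω * lefschetzDual b B x ∈ ⋀[ℝ]^(k + 2) (Dual ℝ V) := by
      have := omega_pow_mul_mem hω2 1 hΛ
      rwa [pow_one, mul_one, add_comm] at this
    obtain ⟨y, hy, hyx⟩ := ih (x := x + c⁻¹ • (ω * lefschetzDual b B x))
      (add_mem hx (Submodule.smul_mem _ _ hωΛ)) (by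
        rw [mul_add, mul_smul_comm, ← mul_assoc, ← pow_succ,
          ← inv_smul_smul₀ hc0 (ω ^ j * x), ← smul_add, add_comm, ← hcomm, smul_zero])
    refine ⟨y - c⁻¹ • lefschetzDual b B x, sub_mem hy (Submodule.smul_mem _ _ hΛ), ?_⟩
    rw [mul_sub, hyx, mul_smul_comm, add_sub_cancel_right]

end Lefschetz

/-- For a symplectic vector space of dimension `2n`, `n ≥ 2` (nondegenerate alternating form
`β` corresponding to `ω ∈ ⋀² V*`), the kernel of wedging with `ω` from `⋀ⁿ V*` to `⋀ⁿ⁺² V*`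
has dimension `binom(2n,n) − binom(2n,n+2)`. -/
theorem wedge_omega_kernel_dim
    (V : Type*) [AddCommGroup V] [Module ℝ V] [FiniteDimensional ℝ V]
    (n : ℕ) (hn : 2 ≤ n) (hdim : finrank ℝ V = 2 * n)
    (ω : ExteriorAlgebra ℝ (Dual ℝ V)) (hω : ω ∈ ⋀[ℝ]^2 (Dual ℝ V))
    (T : ExteriorAlgebra ℝ (Dual ℝ V) →ₗ[ℝ] (V →ₗ[ℝ] V →ₗ[ℝ] ℝ))
    (hT : ∀ (φ ψ : Dual ℝ V) (v w : V),
      T (ι ℝ φ * ι ℝ ψ) v w = φ v * ψ w - φ w * ψ v)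
    (hβalt : ∀ v : V, T ω v v = 0)
    (hβnd : ∀ v : V, (∀ w : V, T ω v w = 0) → v = 0)
    (F : ⋀[ℝ]^n (Dual ℝ V) →ₗ[ℝ] ⋀[ℝ]^(n + 2) (Dual ℝ V))
    (hF : ∀ x : ⋀[ℝ]^n (Dual ℝ V),
      (F x : ExteriorAlgebra ℝ (Dual ℝ V)) = (x : ExteriorAlgebra ℝ (Dual ℝ V)) * ω) :
    finrank ℝ (LinearMap.ker F) = Nat.choose (2 * n) n - Nat.choose (2 * n) (n + 2) := by
  have hfin : ∀ k, finrank ℝ (⋀[ℝ]^k (Dual ℝ V)) = Nat.choose (2 * n) k := fun k => by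
    rw [exteriorPower.finrank_eq, Subspace.dual_finrank_eq, hdim]
  have hinj : Function.Injective (T ω : V →ₗ[ℝ] Dual ℝ V) :=
    (injective_iff_map_eq_zero _).mpr fun v hv => hβnd v fun w => by rw [hv]; rfl
  let B : V ≃ₗ[ℝ] Dual ℝ V :=
    LinearEquiv.ofInjectiveOfFinrankEq (T ω) hinj Subspace.dual_finrank_eq.symm
  have hB : ∀ v, B v = T ω v := fun v => rfl
  have hanti : ∀ v w, B v w = -B w v := fun v w => by
    have h := hβalt (v + w)
    simp only [map_add, LinearMap.add_apply, hβalt] at h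
    rw [hB, hB]
    linarith
  have hcontr : ∀ v x, contr v (ω * x) = ι ℝ (B v) * x + ω * contr v x :=
    contr_two_form_mul T hT hω
  have hsurj : Function.Surjective F := by
    rintro ⟨x, hx⟩
    -- `ωⁿ x` has degree `3n + 2 > 2n`
    have hzero : ω ^ n * x = 0 := by
      have h0 : finrank ℝ (⋀[ℝ]^(2 * n + (n + 2)) (Dual ℝ V)) = 0 := by
        rw [hfin, Nat.choose_eq_zero_of_lt (by omega)]
      have hmem := omega_pow_mul_mem hω n hx
      rwa [Submodule.finrank_eq_zero.mp h0, Submodule.mem_bot] at hmem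
    obtain ⟨y, hy, hyx⟩ := exists_omega_mul_eq (finBasis ℝ V) B hdim hω hanti hcontr
      (by omega) n hx hzero
    refine ⟨⟨y, hy⟩, Subtype.ext ?_⟩
    rw [hF, ← two_form_mul_comm hω, hyx]
  have hrank := F.finrank_range_add_finrank_ker
  rw [LinearMap.range_eq_top.mpr hsurj, finrank_top, hfin, hfin] at hrank
  omega
end

section
/- Let τ ∈ ℂ with τ ∉ ℝ, let Λ = {m + n·τ : m, n ∈ ℤ} ⊂ ℂ, and let O = {z ∈ ℂ : z·λ ∈ Λ for all λ ∈ Λ} be the multiplier ring of Λ. Then O strictly contains the image of ℤ (i.e. there exists z ∈ O with z ∉ ℤ) if and only if there exist integers a, b, c with a ≠ 0 such that a·τ² + b·τ + c = 0. -/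
/-!
If `z` is a non-integral multiplier, then `z = z * 1 = m + n * τ` with `n ≠ 0`, and
`z * τ = p + q * τ` becomes the quadratic relation `n * τ ^ 2 + (m - q) * τ - p = 0`.
Conversely, if `a * τ ^ 2 + b * τ + c = 0`, then `z = a * τ` maps `1` to `a * τ` and `τ` to
`-c - b * τ`, so it preserves the lattice; it is not even real, since `τ` is not.
-/


/-- An elliptic curve `ℂ/(ℤ + ℤτ)` has complex multiplication (its multiplier ring
`O = {z : zΛ ⊆ Λ}` strictly contains `ℤ`) if and only if `τ` satisfies a quadratic
equation with integer coefficients. -/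
theorem complex_multiplication_iff_quadratic
    (τ : ℂ) (hτ : τ ∉ Set.range ((↑) : ℝ → ℂ)) :
    (∃ z : ℂ,
      (∀ l : ℂ, (∃ m n : ℤ, l = (m : ℂ) + (n : ℂ) * τ) →
        ∃ m n : ℤ, z * l = (m : ℂ) + (n : ℂ) * τ) ∧
      z ∉ Set.range ((↑) : ℤ → ℂ)) ↔
    ∃ a b c : ℤ, a ≠ 0 ∧ (a : ℂ) * τ ^ 2 + (b : ℂ) * τ + (c : ℂ) = 0 := by
  constructor
  · rintro ⟨z, hz, hzZ⟩
    obtain ⟨m, n, h1⟩ := hz 1 ⟨1, 0, by simp⟩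
    obtain ⟨p, q, h2⟩ := hz τ ⟨0, 1, by simp⟩
    rw [mul_one] at h1
    refine ⟨n, m - q, -p, ?_, ?_⟩
    · rintro rfl
      exact hzZ ⟨m, by simp [h1]⟩
    · rw [h1] at h2
      push_cast
      linear_combination h2
  · rintro ⟨a, b, c, ha, h⟩
    refine ⟨a * τ, ?_, ?_⟩
    · rintro l ⟨m, n, rfl⟩
      refine ⟨-(n * c), m * a - n * b, ?_⟩
      push_cast
      linear_combination (n : ℂ) * h
    · rintro ⟨k, hk⟩
      have ha' : (a : ℂ) ≠ 0 := by exact_mod_cast ha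
      refine hτ ⟨(k : ℝ) / a, ?_⟩
      push_cast
      rw [hk]
      field_simp
end

section
/- Let V be a finite-dimensional real vector space, σ a nondegenerate alternating bilinear form on V, and J : V → V a linear map with J ∘ J = −id. Define f(x,y) = σ(J x, y) and assume f is alternating. Then the dimension of V is divisible by 4. -/
/-!
The form `f(x, y) = σ (J x, y)` being alternating says that `J` is `σ`-symmetric:
`σ (J x, y) = σ (x, J y)`. Take a maximal `J`-stable `σ`-isotropic subspace `L`. If
`x ∈ L^⊥ \ L`, then `L + ⟨x, J x⟩` is again `J`-stable, and it is isotropic because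
`σ (x, J x) = 0` and `σ (J x, l) = σ (x, J l) = 0` for `l ∈ L`; this contradicts maximality.
So `L = L^⊥`, and nondegeneracy gives `dim V = 2 dim L`. Finally `J` restricts to a complex
structure on `L`, so `dim L` is even (`even_finrank_of_comp_self`).
-/

open Module

/-- A real vector space with a complex structure has even dimension: `det J ^ 2 = (-1) ^ dim`. -/
theorem even_finrank_of_comp_self {V : Type*} [AddCommGroup V] [Module ℝ V]
    (J : V →ₗ[ℝ] V) (hJ : J ∘ₗ J = -LinearMap.id) : Even (finrank ℝ V) := by
  by_contra h
  rw [Nat.not_even_iff_odd] at h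
  have h1 : LinearMap.det J * LinearMap.det J = (-1 : ℝ) ^ finrank ℝ V := by
    rw [← LinearMap.det_comp, hJ, ← neg_one_smul ℝ (LinearMap.id : V →ₗ[ℝ] V),
      LinearMap.det_smul, LinearMap.det_id, mul_one]
  rw [h.neg_one_pow] at h1
  nlinarith [mul_self_nonneg (LinearMap.det J)]

/-- If `σ` is a nondegenerate alternating form on `V`, `J² = -id`, and
`f(x,y) = σ(Jx,y)` is alternating, then `dim V` is divisible by `4`. -/
theorem dim_divisible_by_four
    (V : Type*) [AddCommGroup V] [Module ℝ V] [FiniteDimensional ℝ V]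
    (σ : V →ₗ[ℝ] V →ₗ[ℝ] ℝ)
    (hσalt : ∀ x, σ x x = 0)
    (hσnd : ∀ x, (∀ y, σ x y = 0) → x = 0)
    (J : V →ₗ[ℝ] V) (hJ : J ∘ₗ J = -LinearMap.id)
    (hfalt : ∀ x, σ (J x) x = 0) :
    4 ∣ finrank ℝ V := by
  have hJJ : ∀ x, J (J x) = -x := fun x => LinearMap.congr_fun hJ x
  have hskew : ∀ x y, σ x y = -σ y x := by
    intro x y
    have h := hσalt (x + y)
    simp only [map_add, LinearMap.add_apply, hσalt] at h
    linarith
  have hsymm : ∀ x y, σ (J x) y = σ x (J y) := by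
    intro x y
    have h := hfalt (x + y)
    simp only [map_add, LinearMap.add_apply, hfalt] at h
    rw [hskew x (J y)]
    linarith
  obtain ⟨L, ⟨hLJ, hLiso⟩, hmax⟩ := wellFounded_gt.has_min
    {L : Submodule ℝ V | (∀ x ∈ L, J x ∈ L) ∧ ∀ x ∈ L, ∀ y ∈ L, σ x y = 0}
    ⟨⊥, by simp, by simp⟩
  have hperp : ∀ x, (∀ l ∈ L, σ l x = 0) → x ∈ L := by
    intro x hx
    by_contra hxL
    have hx' : ∀ l ∈ L, σ x l = 0 := fun l hl => by rw [hskew, hx l hl, neg_zero]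
    have hJx : ∀ l ∈ L, σ l (J x) = 0 := fun l hl => by rw [← hsymm]; exact hx _ (hLJ l hl)
    have hJx' : ∀ l ∈ L, σ (J x) l = 0 := fun l hl => by rw [hsymm]; exact hx' _ (hLJ l hl)
    have hmem : ∀ z, z ∈ L ⊔ Submodule.span ℝ {x, J x} ↔
        ∃ l ∈ L, ∃ a b : ℝ, l + (a • x + b • J x) = z := by
      intro z
      simp only [Submodule.mem_sup, Submodule.mem_span_pair]
      constructor
      · rintro ⟨l, hl, _, ⟨a, b, rfl⟩, h⟩
        exact ⟨l, hl, a, b, h⟩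
      · rintro ⟨l, hl, a, b, h⟩
        exact ⟨l, hl, _, ⟨a, b, rfl⟩, h⟩
    refine hmax (L ⊔ Submodule.span ℝ {x, J x}) ⟨?_, ?_⟩ ?_
    · intro z hz
      obtain ⟨l, hl, a, b, rfl⟩ := (hmem z).1 hz
      refine (hmem _).2 ⟨J l, hLJ l hl, -b, a, ?_⟩
      simp only [map_add, map_smul, hJJ]
      module
    · intro z hz w hw
      obtain ⟨l, hl, a, b, rfl⟩ := (hmem z).1 hz
      obtain ⟨m, hm, c, d, rfl⟩ := (hmem w).1 hw
      have hxJ : σ x (J x) = 0 := by rw [← hsymm]; exact hfalt x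
      simp [hLiso l hl m hm, hx l hl, hJx l hl, hx' m hm, hJx' m hm, hσalt, hfalt, hxJ]
    · refine lt_of_le_of_ne le_sup_left fun h => hxL ?_
      rw [h]
      exact (hmem x).2 ⟨0, L.zero_mem, 1, 0, by simp⟩
  have hrefl : LinearMap.BilinForm.IsRefl σ := fun x y h => by rw [hskew, h, neg_zero]
  have hnd : LinearMap.BilinForm.Nondegenerate σ :=
    ⟨hσnd, fun y h => hσnd y fun x => by rw [hskew, h, neg_zero]⟩
  have horth : LinearMap.BilinForm.orthogonal σ L = L := by
    ext x
    rw [LinearMap.BilinForm.mem_orthogonal_iff]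
    exact ⟨fun h => hperp x h, fun h l hl => hLiso l hl x h⟩
  have hdim := LinearMap.BilinForm.finrank_orthogonal hnd L
  rw [horth] at hdim
  have hle := L.finrank_le
  obtain ⟨k, hk⟩ := even_finrank_of_comp_self (J.restrict hLJ) (by
    ext x
    simp [hJJ])
  omega
end

section
/- Let V be a real vector space of dimension 4k (k ≥ 1), σ a nondegenerate alternating bilinear form on V, and J : V → V a linear map with J ∘ J = −id; define f(x,y) = σ(Jx, y) and assume f is alternating. Let θ = f + iσ be the ℂ-valued alternating 2-form θ(x,y) = f(x,y) + i·σ(x,y) on V. Then the (k+1)-fold wedge power θ^{∧(k+1)} vanishes as a ℂ-valued alternating (2k+2)-form on V, while the k-fold wedge power θ^{∧k} is nonzero. -/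
/-!
The endomorphism `J` makes `V` a complex vector space of dimension `2k`, and since
`θ (J x, y) = i θ (x, y)`, the form `θ` is complex bilinear, alternating and nondegenerate
(its imaginary part is `σ`).

Up to a nonzero scalar the wedge power `θ^{∧m}` is the alternatization of the complex multilinear
map `v ↦ ∏ i, θ (v (i, 0)) (v (i, 1))`, with arguments indexed by `Fin m × Fin 2`
(`wedgePow_eq_alternatization`).  So `θ^{∧(k+1)}` is a complex alternating form in
`2k + 2 > 2k` arguments, hence zero.

For the nonvanishing, a symplectic basis `e i, f i` is built by induction
(`exists_hyperbolic`).  On it, a permutation `ρ` of `Fin k × Fin 2` contributes a nonzero term only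
if it permutes the blocks `{i} × Fin 2`, that is `ρ (i, t) = (g i, s i t)`.  Then
`sign ρ = (sign g)² ∏ i, sign (s i)`, while the product of values of `θ` is `∏ i, sign (s i)`, so
the term is `1` (`sign_mul_prod_standard`).  The sum is therefore a positive integer.
-/


/-- The `m`-th wedge power of a `ℂ`-valued 2-form `b` on `V`, as a `(2m)`-multilinear
(alternating) function, given by the standard Pfaffian-type expansion
`Σ_{σ ∈ S_{2m}} sign(σ) Π_i b(v_{σ(2i)}, v_{σ(2i+1)})` (a nonzero scalar multiple,
`2^m m!`, of the wedge power in the exterior algebra of `ℂ`-valued alternating forms). -/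
noncomputable def wedgePow {V : Type*} [AddCommGroup V] [Module ℝ V]
    (b : V → V → ℂ) (m : ℕ) : (Fin (2 * m) → V) → ℂ :=
  fun v => ∑ σ : Equiv.Perm (Fin (2 * m)),
    (Equiv.Perm.sign σ : ℤ) •
      ∏ i : Fin m,
        b (v (σ ⟨2 * (i : ℕ), by have := i.isLt; omega⟩))
          (v (σ ⟨2 * (i : ℕ) + 1, by have := i.isLt; omega⟩))

section ComplexForm

variable {W : Type*} [AddCommGroup W] [Module ℂ W]

/-- The multilinear map `v ↦ ∏ i, b (v (i, 0)) (v (i, 1))`, the tensor power `b^{⊗m}`, with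
arguments indexed by `Fin m × Fin 2`. -/
def pairProd (b : W →ₗ[ℂ] W →ₗ[ℂ] ℂ) (m : ℕ) :
    MultilinearMap ℂ (fun _ : Fin m × Fin 2 => W) ℂ where
  toFun v := ∏ i, b (v (i, 0)) (v (i, 1))
  map_update_add' := by
    intro _ v p x y
    obtain ⟨j, t⟩ := p
    have key : ∀ z : W, ∏ i ∈ ({j} : Finset (Fin m))ᶜ,
        b (Function.update v (j, t) z (i, 0)) (Function.update v (j, t) z (i, 1)) =
        ∏ i ∈ ({j} : Finset (Fin m))ᶜ, b (v (i, 0)) (v (i, 1)) := by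
      intro z
      refine Finset.prod_congr rfl fun i hi => ?_
      have hij : i ≠ j := by simpa using hi
      rw [Function.update_of_ne (by simp [hij]), Function.update_of_ne (by simp [hij])]
    simp only [Fintype.prod_eq_mul_prod_compl j, key]
    fin_cases t <;> simp [add_mul]
  map_update_smul' := by
    intro _ v p c x
    obtain ⟨j, t⟩ := p
    have key : ∀ z : W, ∏ i ∈ ({j} : Finset (Fin m))ᶜ,
        b (Function.update v (j, t) z (i, 0)) (Function.update v (j, t) z (i, 1)) =
        ∏ i ∈ ({j} : Finset (Fin m))ᶜ, b (v (i, 0)) (v (i, 1)) := by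
      intro z
      refine Finset.prod_congr rfl fun i hi => ?_
      have hij : i ≠ j := by simpa using hi
      rw [Function.update_of_ne (by simp [hij]), Function.update_of_ne (by simp [hij])]
    simp only [Fintype.prod_eq_mul_prod_compl j, key]
    fin_cases t <;> simp [mul_assoc]

/-- The bijection `(i, t) ↦ 2 i + t`. -/
def pairEquiv (m : ℕ) : Fin m × Fin 2 ≃ Fin (2 * m) :=
  finProdFinEquiv.trans (finCongr (mul_comm m 2))

lemma wedgePow_eq_alternatization [Module ℝ W] (b : W →ₗ[ℂ] W →ₗ[ℂ] ℂ) (m : ℕ)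
    (v : Fin (2 * m) → W) :
    wedgePow (fun x y => b x y) m v =
      MultilinearMap.alternatization (pairProd b m) (v ∘ pairEquiv m) := by
  rw [MultilinearMap.alternatization_apply, wedgePow]
  symm
  refine Fintype.sum_equiv (pairEquiv m).permCongr _ _ fun ρ => ?_
  rw [Equiv.Perm.sign_permCongr]
  have h0 : ∀ i : Fin m, (pairEquiv m).symm ⟨2 * (i : ℕ), by have := i.isLt; omega⟩ = (i, 0) := by
    intro i
    rw [Equiv.symm_apply_eq]
    ext
    simp [pairEquiv]
  have h1 : ∀ i : Fin m,
      (pairEquiv m).symm ⟨2 * (i : ℕ) + 1, by have := i.isLt; omega⟩ = (i, 1) := by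
    intro i
    rw [Equiv.symm_apply_eq]
    ext
    simp [pairEquiv, add_comm]
  simp only [Equiv.permCongr_apply, h0, h1]
  rfl

/-- `e, f` is a hyperbolic family for `b`: `b (e i) (f j) = δ i j`, and all other values between
members of the family vanish (up to skew symmetry). -/
structure IsHyperbolic (b : W →ₗ[ℂ] W →ₗ[ℂ] ℂ) {r : ℕ} (e f : Fin r → W) : Prop where
  ee : ∀ i j, b (e i) (e j) = 0
  ff : ∀ i j, b (f i) (f j) = 0
  ef : ∀ i j, b (e i) (f j) = if i = j then 1 else 0

/-- Symplectic projection: every vector is orthogonal to a hyperbolic family up to a correction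
in its span. -/
lemma IsHyperbolic.exists_proj {b : W →ₗ[ℂ] W →ₗ[ℂ] ℂ} (hskew : ∀ x y, b x y = -b y x)
    {r : ℕ} {e f : Fin r → W} (h : IsHyperbolic b e f) (x : W) :
    ∃ z ∈ Submodule.span ℂ (Set.range (Sum.elim e f)),
      (∀ j, b (x - z) (e j) = 0) ∧ ∀ j, b (x - z) (f j) = 0 := by
  have fe : ∀ i j, b (f i) (e j) = if i = j then -1 else 0 := by
    intro i j
    rw [hskew, h.ef]
    by_cases hij : i = j
    · simp [hij]
    · simp [hij, Ne.symm hij]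
  refine ⟨∑ i, b x (f i) • e i - ∑ i, b x (e i) • f i, ?_, ?_, ?_⟩
  · refine Submodule.sub_mem _ (Submodule.sum_mem _ fun i _ => Submodule.smul_mem _ _ ?_)
      (Submodule.sum_mem _ fun i _ => Submodule.smul_mem _ _ ?_)
    · exact Submodule.subset_span ⟨Sum.inl i, rfl⟩
    · exact Submodule.subset_span ⟨Sum.inr i, rfl⟩
  · intro j
    simp [h.ee, fe, LinearMap.sum_apply]
  · intro j
    simp [h.ff, h.ef, LinearMap.sum_apply]

lemma exists_hyperbolic (b : W →ₗ[ℂ] W →ₗ[ℂ] ℂ) (halt : ∀ x, b x x = 0)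
    (hskew : ∀ x y, b x y = -b y x) (hnd : ∀ x, (∀ y, b x y = 0) → x = 0)
    (k : ℕ) (hdim : Module.finrank ℂ W = 2 * k) :
    ∀ r ≤ k, ∃ e f : Fin r → W, IsHyperbolic b e f := by
  intro r
  induction r with
  | zero => exact fun _ => ⟨0, 0, ⟨fun i => i.elim0, fun i => i.elim0, fun i => i.elim0⟩⟩
  | succ r ih =>
    intro hr
    obtain ⟨e, f, h⟩ := ih (by omega)
    obtain ⟨x, hx⟩ : ∃ x, x ∉ Submodule.span ℂ (Set.range (Sum.elim e f)) := by
      by_contra! hall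
      have htop : Submodule.span ℂ (Set.range (Sum.elim e f)) = ⊤ :=
        (Submodule.eq_top_iff').2 hall
      have hle := finrank_range_le_card (R := ℂ) (Sum.elim e f)
      rw [Set.finrank, htop, finrank_top, hdim] at hle
      simp at hle
      omega
    obtain ⟨z, hz, hze, hzf⟩ := h.exists_proj hskew x
    have hne : x - z ≠ 0 := fun h0 => hx (by rwa [sub_eq_zero.1 h0])
    obtain ⟨y, hy⟩ : ∃ y, b (x - z) y ≠ 0 := by
      by_contra! hall
      exact hne (hnd _ hall)
    obtain ⟨w, hw, hwe, hwf⟩ := h.exists_proj hskew y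
    -- `w` lies in the span of the family, to which `x - z` is orthogonal.
    have hxw : b (x - z) w = 0 := by
      have hle : Submodule.span ℂ (Set.range (Sum.elim e f)) ≤ LinearMap.ker (b (x - z)) := by
        rw [Submodule.span_le]
        rintro _ ⟨i | i, rfl⟩
        · exact hze i
        · exact hzf i
      exact hle hw
    have hxy : b (x - z) (y - w) ≠ 0 := by rwa [map_sub, hxw, sub_zero]
    generalize x - z = x' at *
    generalize y - w = y' at *
    have hze' : ∀ j, b (e j) x' = 0 := fun j => by rw [hskew, hze, neg_zero]
    have hzf' : ∀ j, b (f j) x' = 0 := fun j => by rw [hskew, hzf, neg_zero]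
    have hwe' : ∀ j, b (e j) y' = 0 := fun j => by rw [hskew, hwe, neg_zero]
    have hwf' : ∀ j, b (f j) y' = 0 := fun j => by rw [hskew, hwf, neg_zero]
    refine ⟨Fin.snoc e x', Fin.snoc f ((b x' y')⁻¹ • y'), ⟨?_, ?_, ?_⟩⟩
    · intro i j
      induction i using Fin.lastCases <;> induction j using Fin.lastCases <;>
        simp [halt, h.ee, hze, hze']
    · intro i j
      induction i using Fin.lastCases <;> induction j using Fin.lastCases <;>
        simp [halt, h.ff, hwf, hwf']
    · intro i j
      induction i using Fin.lastCases <;> induction j using Fin.lastCases <;>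
        simp [h.ef, hzf, hwe', hxy, Fin.castSucc_ne_last, (Fin.castSucc_ne_last _).symm]

end ComplexForm

/-- The standard symplectic form on the coordinate vectors indexed by `Fin k × Fin 2`. -/
def standardForm {k : ℕ} (p q : Fin k × Fin 2) : ℤ :=
  if p.1 = q.1 then (q.2 : ℤ) - (p.2 : ℤ) else 0

/-- Every term of the Pfaffian expansion of the standard symplectic form is `0` or `1`. -/
lemma sign_mul_prod_standard {k : ℕ} (ρ : Equiv.Perm (Fin k × Fin 2)) :
    ∃ n : ℕ, (Equiv.Perm.sign ρ : ℤ) * ∏ i, standardForm (ρ (i, 0)) (ρ (i, 1)) = n := by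
  by_cases hρ : ∀ i, (ρ (i, 0)).1 = (ρ (i, 1)).1
  · have hρ' : ∀ i t, (ρ (i, t)).1 = (ρ (i, 0)).1 := by
      intro i t
      fin_cases t
      · rfl
      · exact (hρ i).symm
    have hg : Function.Bijective fun i => (ρ (i, 0)).1 := by
      refine Finite.surjective_iff_bijective.1 fun j => ⟨(ρ.symm (j, 0)).1, ?_⟩
      have := hρ' (ρ.symm (j, 0)).1 (ρ.symm (j, 0)).2
      simpa using this.symm
    have hs : ∀ i, Function.Bijective fun t => (ρ (i, t)).2 := by
      intro i
      refine Finite.injective_iff_bijective.1 fun t t' htt => ?_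
      have : ρ (i, t) = ρ (i, t') := Prod.ext (by rw [hρ', hρ' i t']) htt
      simpa using ρ.injective this
    let g : Equiv.Perm (Fin k) := Equiv.ofBijective _ hg
    let s : Fin k → Equiv.Perm (Fin 2) := fun i => Equiv.ofBijective _ (hs i)
    have hdec : ρ = Equiv.prodCongrLeft (fun _ : Fin 2 => g) * Equiv.prodCongrRight s := by
      ext p : 1
      exact Prod.ext (hρ' p.1 p.2) rfl
    have hval : ∀ τ : Equiv.Perm (Fin 2), ((τ 1 : Fin 2) : ℤ) - ((τ 0 : Fin 2) : ℤ) =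
        (Equiv.Perm.sign τ : ℤ) := by decide
    have hprod : ∏ i, standardForm (ρ (i, 0)) (ρ (i, 1)) =
        ∏ i, ((Equiv.Perm.sign (s i) : ℤˣ) : ℤ) := by
      refine Finset.prod_congr rfl fun i _ => ?_
      rw [standardForm, if_pos (hρ i)]
      exact hval (s i)
    have hsign : Equiv.Perm.sign ρ = ∏ i, Equiv.Perm.sign (s i) := by
      rw [hdec, map_mul, Equiv.Perm.sign_prodCongrLeft, Equiv.Perm.sign_prodCongrRight]
      simp
    refine ⟨1, ?_⟩
    rw [hprod, hsign, ← Units.coe_prod, ← Units.val_mul, Int.units_mul_self]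
    simp
  · push Not at hρ
    obtain ⟨i, hi⟩ := hρ
    exact ⟨0, by rw [Finset.prod_eq_zero (Finset.mem_univ i) (if_neg hi)]; simp⟩

lemma sum_sign_mul_prod_standard_ne_zero (k : ℕ) :
    ∑ ρ : Equiv.Perm (Fin k × Fin 2),
      (Equiv.Perm.sign ρ : ℤ) * ∏ i, standardForm (ρ (i, 0)) (ρ (i, 1)) ≠ 0 := by
  refine ne_of_gt (Finset.sum_pos' (fun ρ _ => ?_) ⟨1, Finset.mem_univ _, ?_⟩)
  · obtain ⟨n, hn⟩ := sign_mul_prod_standard ρ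
    rw [hn]
    positivity
  · simp [standardForm]

section ComplexForm

variable {W : Type*} [AddCommGroup W] [Module ℂ W] [Module ℝ W]

lemma wedgePow_succ_eq_zero [FiniteDimensional ℂ W] (b : W →ₗ[ℂ] W →ₗ[ℂ] ℂ) (k : ℕ)
    (hdim : Module.finrank ℂ W = 2 * k) :
    wedgePow (fun x y => b x y) (k + 1) = 0 := by
  funext v
  rw [wedgePow_eq_alternatization]
  refine AlternatingMap.map_linearDependent _ _ fun hli => ?_
  have := hli.fintype_card_le_finrank
  simp [hdim] at this
  omega

lemma wedgePow_ne_zero (b : W →ₗ[ℂ] W →ₗ[ℂ] ℂ) (halt : ∀ x, b x x = 0)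
    (hskew : ∀ x y, b x y = -b y x) (hnd : ∀ x, (∀ y, b x y = 0) → x = 0)
    (k : ℕ) (hdim : Module.finrank ℂ W = 2 * k) :
    wedgePow (fun x y => b x y) k ≠ 0 := by
  obtain ⟨e, f, h⟩ := exists_hyperbolic b halt hskew hnd k hdim k le_rfl
  let u : Fin k × Fin 2 → W := fun p => if p.2 = 0 then e p.1 else f p.1
  have hu : ∀ p q, b (u p) (u q) = (standardForm p q : ℂ) := by
    rintro ⟨i, s⟩ ⟨j, t⟩
    have hfe : b (f i) (e j) = if i = j then -1 else 0 := by
      rw [hskew, h.ef, apply_ite Neg.neg, neg_zero]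
      exact if_congr eq_comm rfl rfl
    fin_cases s <;> fin_cases t <;> simp [u, standardForm, h.ee, h.ff, h.ef, hfe]
  intro h0
  have h1 := congrFun h0 (u ∘ (pairEquiv k).symm)
  rw [wedgePow_eq_alternatization, MultilinearMap.alternatization_apply] at h1
  apply sum_sign_mul_prod_standard_ne_zero k
  have h2 : ((∑ ρ : Equiv.Perm (Fin k × Fin 2),
      (Equiv.Perm.sign ρ : ℤ) * ∏ i, standardForm (ρ (i, 0)) (ρ (i, 1)) : ℤ) : ℂ) = 0 := by
    rw [← Pi.zero_apply (M := fun _ => ℂ) (u ∘ (pairEquiv k).symm), ← h1]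
    push_cast
    refine Finset.sum_congr rfl fun ρ _ => ?_
    simp [pairProd, hu, Units.smul_def, Function.comp_def]
  exact_mod_cast h2

end ComplexForm

/-- For `V` of real dimension `4k` (`k ≥ 1`), `σ` nondegenerate alternating, `J² = -id`,
and `f(x,y) = σ(Jx,y)` alternating, the form `θ = f + iσ` satisfies
`θ^{∧(k+1)} = 0` while `θ^{∧k} ≠ 0`. -/
theorem theta_wedge_powers
    (V : Type*) [AddCommGroup V] [Module ℝ V] [FiniteDimensional ℝ V]
    (k : ℕ) (hk : 1 ≤ k) (hdim : Module.finrank ℝ V = 4 * k)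
    (σ : V →ₗ[ℝ] V →ₗ[ℝ] ℝ)
    (hσalt : ∀ x, σ x x = 0)
    (hσnd : ∀ x, (∀ y, σ x y = 0) → x = 0)
    (J : V →ₗ[ℝ] V) (hJ : J ∘ₗ J = -LinearMap.id)
    (hfalt : ∀ x, σ (J x) x = 0) :
    wedgePow (fun x y => (σ (J x) y : ℂ) + Complex.I * (σ x y : ℂ)) (k + 1) = 0 ∧
    wedgePow (fun x y => (σ (J x) y : ℂ) + Complex.I * (σ x y : ℂ)) k ≠ 0 := by
  have hJJ : ∀ x, J (J x) = -x := fun x => by simpa using LinearMap.congr_fun hJ x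
  have hσskew : ∀ x y, σ x y = -σ y x := by
    intro x y
    have := hσalt (x + y)
    simp only [map_add, LinearMap.add_apply, hσalt] at this
    linarith
  have hfskew : ∀ x y, σ (J x) y = -σ (J y) x := by
    intro x y
    have := hfalt (x + y)
    simp only [map_add, LinearMap.add_apply, hfalt] at this
    linarith
  -- The complex structure on `V` in which `i` acts as `J`.
  let φ : ℂ →ₐ[ℝ] Module.End ℝ V := Complex.lift ⟨J, hJ⟩
  let _ : Module ℂ V := Module.compHom V φ.toRingHom
  have hsmul : ∀ (c : ℂ) (x : V), c • x = c.re • x + c.im • J x := by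
    intro c x
    change φ c x = _
    simp [φ, Complex.liftAux_apply, Module.algebraMap_end_apply]
  have : IsScalarTower ℝ ℂ V := by
    refine ⟨fun r c x => ?_⟩
    simp [hsmul, smul_add, mul_smul]
  have : FiniteDimensional ℂ V := FiniteDimensional.right ℝ ℂ V
  have hdimC : Module.finrank ℂ V = 2 * k := by
    have := Module.finrank_mul_finrank ℝ ℂ V
    rw [Complex.finrank_real_complex, hdim] at this
    omega
  let θ : V → V → ℂ := fun x y => (σ (J x) y : ℂ) + Complex.I * (σ x y : ℂ)
  have hskew : ∀ x y, θ x y = -θ y x := by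
    intro x y
    simp only [θ]
    rw [hσskew x y, hfskew x y]
    push_cast
    ring
  have hadd : ∀ x x' y, θ (x + x') y = θ x y + θ x' y := by
    intro x x' y
    simp only [θ, map_add, LinearMap.add_apply]
    push_cast
    ring
  have hsm : ∀ (c : ℂ) x y, θ (c • x) y = c • θ x y := by
    intro c x y
    simp only [θ, hsmul, map_add, map_smul, LinearMap.add_apply, LinearMap.smul_apply, hJJ,
      map_neg, LinearMap.neg_apply]
    apply Complex.ext <;> simp <;> ring
  let b : V →ₗ[ℂ] V →ₗ[ℂ] ℂ := LinearMap.mk₂ ℂ θ hadd hsm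
    (fun x y y' => by rw [hskew, hadd, hskew x y, hskew x y', neg_add])
    (fun c x y => by rw [hskew, hsm, hskew x y, smul_neg])
  refine ⟨wedgePow_succ_eq_zero b k hdimC,
    wedgePow_ne_zero b (fun x => ?_) hskew (fun x hx => hσnd x fun y => ?_) k hdimC⟩
  · simp [b, θ, hσalt, hfalt]
  · simpa [b, θ] using congrArg Complex.im (hx y)
end
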